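/- Fix N ≥ 3 and work with complex matrices indexed by bit strings x, y : Fin N → Fin 2. Let Z^{⊗N} be the diagonal matrix with (x, x)-entry ∏_{k} (−1)^{x(k)}, and let ρ := 2^{−N} (I + Z^{⊗N}) be the boundary state of the toric code. Then: (a) ρ is positive semidefinite with Tr(ρ) = 1; (b) for any two sites i ≠ j and any A, B ∈ M₂(ℂ), letting A_i denote the embedding of A at site i (the matrix with (x, y)-entry A_{x(i), y(i)} · ∏_{k ≠ i} [x(k) = y(k)], and similarly B_j), one has Tr(ρ · A_i · B_j) = Tr(ρ · A_i) · Tr(ρ · B_j). In particular all connected two-point correlation functions of ρ between distinct sites vanish. -/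

import Mathlib

open Matrix
open scoped ComplexOrder

/-- The embedding of a one-qubit operator `A` at site `i` of an `N`-qubit chain. -/
def embedAt {N : ℕ} (A : Matrix (Fin 2) (Fin 2) ℂ) (i : Fin N) :
    Matrix (Fin N → Fin 2) (Fin N → Fin 2) ℂ :=
  fun x y => A (x i) (y i) * ∏ k ∈ Finset.univ.erase i, (if x k = y k then (1 : ℂ) else 0)

theorem sum_aux {N : ℕ} (u g h : Fin 2 → ℂ) (i j : Fin N) (hij : i ≠ j) :
    ∑ x : Fin N → Fin 2, (∏ k, u (x k)) * g (x i) * h (x j) =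
      (∑ c, u c * g c) * (∑ c, u c * h c) * (∑ c, u c) ^ (N - 2) := by
  have h1 : ∀ x : Fin N → Fin 2, (∏ k, u (x k)) * g (x i) * h (x j) =
      ∏ k, (u (x k) * (if k = i then g (x k) else 1) * (if k = j then h (x k) else 1)) := by
    intro x
    rw [Finset.prod_mul_distrib, Finset.prod_mul_distrib]
    simp
  simp_rw [h1]
  have h2 := Finset.prod_univ_sum (fun _ : Fin N => (Finset.univ : Finset (Fin 2)))
    (fun k c => u c * (if k = i then g c else 1) * (if k = j then h c else 1))
  rw [Fintype.piFinset_univ] at h2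
  rw [← h2, ← Finset.mul_prod_erase _ _ (Finset.mem_univ i),
    ← Finset.mul_prod_erase _ _ (Finset.mem_erase.2 ⟨hij.symm, Finset.mem_univ j⟩), ← mul_assoc]
  congr 1
  · simp [hij, hij.symm]
  · rw [Finset.prod_congr rfl (g := fun _ => ∑ c, u c)]
    · rw [Finset.prod_const, Finset.card_erase_of_mem
        (Finset.mem_erase.2 ⟨hij.symm, Finset.mem_univ j⟩), Finset.card_erase_of_mem
        (Finset.mem_univ i)]
      simp [Nat.sub_sub]
    · intro k hk
      simp only [Finset.mem_erase] at hk
      simp [hk.1, hk.2.1]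

theorem sum_rho {N : ℕ} (hN : 3 ≤ N) (g h : Fin 2 → ℂ) (i j : Fin N) (hij : i ≠ j) :
    ∑ x : Fin N → Fin 2, ((2 : ℂ) ^ N)⁻¹ * (1 + ∏ k, (-1 : ℂ) ^ ((x k : ℕ))) * g (x i) * h (x j) =
      ((∑ c, g c) / 2) * ((∑ c, h c) / 2) := by
  have e1 := sum_aux (fun _ => 1) g h i j hij
  have e2 := sum_aux (fun c => (-1 : ℂ) ^ (c : ℕ)) g h i j hij
  have hz : (∑ c : Fin 2, (-1 : ℂ) ^ (c : ℕ)) = 0 := by simp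
  rw [hz, zero_pow (by omega), mul_zero] at e2
  simp only [Finset.prod_const_one, one_mul] at e1
  have : ∀ x : Fin N → Fin 2,
      ((2 : ℂ) ^ N)⁻¹ * (1 + ∏ k, (-1 : ℂ) ^ ((x k : ℕ))) * g (x i) * h (x j) =
      ((2 : ℂ) ^ N)⁻¹ * (g (x i) * h (x j) + (∏ k, (-1 : ℂ) ^ ((x k : ℕ))) * g (x i) * h (x j)) := by
    intro x; ring
  simp_rw [this]
  rw [← Finset.mul_sum, Finset.sum_add_distrib, e1, e2]
  obtain ⟨m, rfl⟩ : ∃ m, N = m + 2 := ⟨N - 2, by omega⟩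
  simp only [Finset.sum_const, Finset.card_univ, Fintype.card_fin, Nat.add_sub_cancel, pow_add,
    nsmul_eq_mul, mul_one, Nat.cast_ofNat]
  field_simp
  ring

theorem embedAt_diag {N : ℕ} (A : Matrix (Fin 2) (Fin 2) ℂ) (i : Fin N) (x : Fin N → Fin 2) :
    embedAt A i x x = A (x i) (x i) := by
  simp [embedAt]

theorem embedAt_eq_zero {N : ℕ} (A : Matrix (Fin 2) (Fin 2) ℂ) (i k : Fin N) (hk : k ≠ i)
    (x y : Fin N → Fin 2) (h : x k ≠ y k) : embedAt A i x y = 0 := by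
  unfold embedAt
  rw [Finset.prod_eq_zero (i := k) (by simp [hk]) (by simp [h]), mul_zero]

theorem embedAt_mul_diag {N : ℕ} (A B : Matrix (Fin 2) (Fin 2) ℂ) (i j : Fin N) (hij : i ≠ j)
    (x : Fin N → Fin 2) :
    (embedAt A i * embedAt B j) x x = A (x i) (x i) * B (x j) (x j) := by
  rw [Matrix.mul_apply, Finset.sum_eq_single x]
  · simp only [embedAt_diag]
  · intro y _ hy
    obtain ⟨k, hk⟩ := Function.ne_iff.1 hy
    by_cases hki : k = i
    · subst hki
      rw [embedAt_eq_zero B j k hij y x hk, mul_zero]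
    · rw [embedAt_eq_zero A i k hki x y hk.symm, zero_mul]
  · simp

/-- the boundary state of the toric code,
`ρ = 2^{-N} (I + Z^{⊗N})`, is a density matrix all of whose connected two-point
correlation functions between distinct sites vanish. -/
theorem toric_code_boundary_short_range {N : ℕ} (hN : 3 ≤ N)
    (ZN : Matrix (Fin N → Fin 2) (Fin N → Fin 2) ℂ)
    (hZN : ZN = Matrix.diagonal (fun x => ∏ k, (-1 : ℂ) ^ ((x k : ℕ))))
    (ρ : Matrix (Fin N → Fin 2) (Fin N → Fin 2) ℂ)
    (hρ : ρ = ((2 : ℂ) ^ N)⁻¹ • ((1 : Matrix (Fin N → Fin 2) (Fin N → Fin 2) ℂ) + ZN)) :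
    ρ.PosSemidef ∧ ρ.trace = 1 ∧
    ∀ i j : Fin N, i ≠ j → ∀ A B : Matrix (Fin 2) (Fin 2) ℂ,
      (ρ * embedAt A i * embedAt B j).trace =
        (ρ * embedAt A i).trace * (ρ * embedAt B j).trace := by
  have hd : ρ = Matrix.diagonal
      (fun x => ((2 : ℂ) ^ N)⁻¹ * (1 + ∏ k, (-1 : ℂ) ^ ((x k : ℕ)))) := by
    rw [hρ, hZN, ← Matrix.diagonal_one, Matrix.diagonal_add, ← Matrix.diagonal_smul]
    rfl
  have htr : ∀ M : Matrix (Fin N → Fin 2) (Fin N → Fin 2) ℂ, (ρ * M).trace =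
      ∑ x : Fin N → Fin 2, ((2 : ℂ) ^ N)⁻¹ * (1 + ∏ k, (-1 : ℂ) ^ ((x k : ℕ))) * M x x := by
    intro M
    simp only [hd, Matrix.trace, Matrix.diag, Matrix.diagonal_mul]
  have h1 : ∀ (i : Fin N) (A : Matrix (Fin 2) (Fin 2) ℂ),
      (ρ * embedAt A i).trace = (∑ c, A c c) / 2 := by
    intro i A
    have : Nontrivial (Fin N) := Fin.nontrivial_iff_two_le.2 (by omega)
    obtain ⟨j, hj⟩ := exists_ne i
    have := sum_rho hN (fun c => A c c) (fun _ => 1) i j hj.symm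
    rw [htr]
    simp only [embedAt_diag]
    simpa using this
  refine ⟨?_, ?_, ?_⟩
  · rw [hd, Matrix.posSemidef_diagonal_iff]
    intro x
    refine mul_nonneg (by positivity) ?_
    rw [Finset.prod_pow_eq_pow_sum]
    rcases neg_one_pow_eq_or ℂ (∑ k, (x k : ℕ)) with h | h <;> rw [h] <;> norm_num
  · have := sum_rho hN (fun _ => 1) (fun _ => 1) ⟨0, by omega⟩ ⟨1, by omega⟩ (by simp)
    rw [hd, Matrix.trace_diagonal]
    simpa using this
  · intro i j hij A B
    rw [h1, h1, Matrix.mul_assoc, htr]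
    simp only [embedAt_mul_diag A B i j hij, ← mul_assoc]
    exact sum_rho hN (fun c => A c c) (fun c => B c c) i j hij
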